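/- arXiv:1707.02418 — 2 statements merged into one kernel-verified Lean document; each statement's English description precedes it below -/
import Mathlib

section
/- Let F ⊆ ℝ × ℝ be a compact convex set and c = (c₁, c₂) ∈ ℝ × ℝ, and suppose there exists p ∈ F with c₁ < p₁ and c₂ < p₂. Then there exists a unique point q ∈ F with q₁ ≥ c₁ and q₂ ≥ c₂ that maximizes the Nash product, i.e. such that for every r ∈ F with r₁ ≥ c₁ and r₂ ≥ c₂ one has (r₁ − c₁)·(r₂ − c₂) ≤ (q₁ − c₁)·(q₂ − c₂). -/
/-!
A continuous function attains its maximum on the compact set of feasible points dominating `c`.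
If two distinct such points attained the same maximal, hence positive, Nash product, their gain
vectors `(a, b)` and `(x, y)` would lie on one branch of a hyperbola, so `(a - x) * (b - y) < 0`.
At the convex combination with positive weights `u + v = 1` the product exceeds the common value
by `-(u * v * ((a - x) * (b - y)))`, contradicting maximality.
-/

open Set

section Hyperbola

variable {R : Type*} [CommRing R] [LinearOrder R] [IsStrictOrderedRing R] {a b x y u v : R}

theorem sub_mul_sub_neg_of_mul_eq_mul (hb : 0 < b) (hx : 0 ≤ x) (h : a * b = x * y)
    (hne : a ≠ x) : (a - x) * (b - y) < 0 := by
  have hsq : 0 < b * (a - x) ^ 2 := mul_pos hb (sq_pos_of_ne_zero (sub_ne_zero.2 hne))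
  have hmul : x * ((a - x) * (b - y)) = -(b * (a - x) ^ 2) := by
    linear_combination (a - x) * h
  exact neg_of_mul_neg_right (hmul.trans_lt (neg_neg_of_pos hsq)) hx

theorem mul_lt_convexCombo_mul_convexCombo (hb : 0 < b) (hx : 0 ≤ x) (h : a * b = x * y)
    (hne : a ≠ x) (hu : 0 < u) (hv : 0 < v) (huv : u + v = 1) :
    a * b < (u * a + v * x) * (u * b + v * y) := by
  have hneg : u * v * ((a - x) * (b - y)) < 0 :=
    mul_neg_of_pos_of_neg (mul_pos hu hv) (sub_mul_sub_neg_of_mul_eq_mul hb hx h hne)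
  calc
    a * b < a * b - u * v * ((a - x) * (b - y)) := by linarith
    _ = (u * a + v * x) * (u * b + v * y) := by
      obtain rfl : v = 1 - u := eq_sub_of_add_eq' huv
      linear_combination (1 - u) * h

end Hyperbola

/-- The Nash product of the outcome `q`: the product of the two players' gains over the
disagreement point `c`. -/
def nashProduct {R : Type*} [CommRing R] (c q : R × R) : R :=
  (q.1 - c.1) * (q.2 - c.2)

/-- `q` solves the bargaining problem with feasibility set `F` and disagreement point `c`. The
outcomes that give both players at least their disagreement payoff form `Set.Ici c` for the
product order. -/
def IsNashSolution {R : Type*} [CommRing R] [Preorder R] (F : Set (R × R)) (c q : R × R) : Prop :=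
  q ∈ F ∩ Ici c ∧ IsMaxOn (nashProduct c) (F ∩ Ici c) q

theorem isNashSolution_iff {R : Type*} [CommRing R] [Preorder R] {F : Set (R × R)} {c q : R × R} :
    IsNashSolution F c q ↔ q ∈ F ∧ c.1 ≤ q.1 ∧ c.2 ≤ q.2 ∧
      ∀ r ∈ F, c.1 ≤ r.1 → c.2 ≤ r.2 →
        (r.1 - c.1) * (r.2 - c.2) ≤ (q.1 - c.1) * (q.2 - c.2) := by
  simp only [IsNashSolution, isMaxOn_iff, mem_inter_iff, mem_Ici, Prod.le_def, nashProduct,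
    and_imp, and_assoc]

theorem continuous_nashProduct {R : Type*} [CommRing R] [TopologicalSpace R] [IsTopologicalRing R]
    (c : R × R) : Continuous (nashProduct c) := by
  unfold nashProduct
  fun_prop

theorem exists_isNashSolution_of_isCompact {R : Type*} [CommRing R] [LinearOrder R]
    [TopologicalSpace R] [IsTopologicalRing R] [OrderClosedTopology R] {F : Set (R × R)}
    {c : R × R} (hF : IsCompact F) (hne : (F ∩ Ici c).Nonempty) : ∃ q, IsNashSolution F c q :=
  (hF.inter_right isClosed_Ici).exists_isMaxOn hne (continuous_nashProduct c).continuousOn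

section Ordered

variable {R : Type*} [CommRing R] [LinearOrder R] [IsStrictOrderedRing R] {c p q r : R × R}

theorem nashProduct_pos (h₁ : c.1 < p.1) (h₂ : c.2 < p.2) : 0 < nashProduct c p :=
  mul_pos (sub_pos.2 h₁) (sub_pos.2 h₂)

theorem nashProduct_lt_nashProduct_convexCombo {u v : R} (hq : c ≤ q) (hr : c ≤ r)
    (hpos : 0 < nashProduct c q) (heq : nashProduct c q = nashProduct c r) (hne : q ≠ r)
    (hu : 0 < u) (hv : 0 < v) (huv : u + v = 1) :
    nashProduct c q < nashProduct c (u • q + v • r) := by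
  have hq₁ : 0 < q.1 - c.1 := pos_of_mul_pos_left hpos (sub_nonneg.2 hq.2)
  have hq₂ : 0 < q.2 - c.2 := pos_of_mul_pos_right hpos (sub_nonneg.2 hq.1)
  have hne₁ : q.1 - c.1 ≠ r.1 - c.1 := by
    intro h₁
    have h₂ : q.2 - c.2 = r.2 - c.2 := by
      refine mul_left_cancel₀ hq₁.ne' ?_
      rwa [nashProduct, nashProduct, ← h₁] at heq
    exact hne (Prod.ext (sub_left_injective h₁) (sub_left_injective h₂))
  calc
    nashProduct c q < (u * (q.1 - c.1) + v * (r.1 - c.1)) * (u * (q.2 - c.2) + v * (r.2 - c.2)) :=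
      mul_lt_convexCombo_mul_convexCombo hq₂ (sub_nonneg.2 hr.1) heq hne₁ hu hv huv
    _ = nashProduct c (u • q + v • r) := by
      obtain rfl : v = 1 - u := eq_sub_of_add_eq' huv
      simp only [nashProduct, Prod.fst_add, Prod.snd_add, Prod.smul_fst, Prod.smul_snd,
        smul_eq_mul]
      ring

end Ordered

theorem IsNashSolution.unique {𝕜 : Type*} [Field 𝕜] [LinearOrder 𝕜] [IsStrictOrderedRing 𝕜]
    {F : Set (𝕜 × 𝕜)} {c q r : 𝕜 × 𝕜} (hq : IsNashSolution F c q) (hr : IsNashSolution F c r)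
    (hF : Convex 𝕜 F) (hdom : ∃ p ∈ F, c.1 < p.1 ∧ c.2 < p.2) : q = r := by
  obtain ⟨hqF, hqmax⟩ := hq
  obtain ⟨hrF, hrmax⟩ := hr
  obtain ⟨p, hpF, hp₁, hp₂⟩ := hdom
  have hpos : 0 < nashProduct c q :=
    (nashProduct_pos hp₁ hp₂).trans_le (hqmax ⟨hpF, hp₁.le, hp₂.le⟩)
  have heq : nashProduct c q = nashProduct c r := le_antisymm (hrmax hqF) (hqmax hrF)
  by_contra hne
  have hhalf : (0 : 𝕜) < 1 / 2 := one_half_pos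
  have hmid : (1 / 2 : 𝕜) • q + (1 / 2 : 𝕜) • r ∈ F ∩ Ici c :=
    (hF.inter (convex_Ici c)) hqF hrF hhalf.le hhalf.le (add_halves 1)
  exact (hqmax hmid).not_gt <|
    nashProduct_lt_nashProduct_convexCombo hqF.2 hrF.2 hpos heq hne hhalf hhalf (add_halves 1)

/-- Existence and uniqueness of the Nash bargaining solution: for a compact convex
feasibility set `F` containing a point strictly dominating the disagreement point `c`,
there is a unique individually rational point of `F` maximizing the Nash product. -/
theorem nash_solution_exists_unique (F : Set (ℝ × ℝ)) (hFcomp : IsCompact F)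
    (hFconv : Convex ℝ F) (c : ℝ × ℝ) (hdom : ∃ p ∈ F, c.1 < p.1 ∧ c.2 < p.2) :
    ∃! q : ℝ × ℝ, q ∈ F ∧ c.1 ≤ q.1 ∧ c.2 ≤ q.2 ∧
      ∀ r ∈ F, c.1 ≤ r.1 → c.2 ≤ r.2 →
        (r.1 - c.1) * (r.2 - c.2) ≤ (q.1 - c.1) * (q.2 - c.2) := by
  have hne : (F ∩ Ici c).Nonempty :=
    let ⟨p, hpF, hp₁, hp₂⟩ := hdom
    ⟨p, hpF, hp₁.le, hp₂.le⟩
  obtain ⟨q, hq⟩ := exists_isNashSolution_of_isCompact hFcomp hne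
  simp only [← isNashSolution_iff]
  exact ⟨q, hq, fun r hr ↦ hr.unique hq hFconv hdom⟩
end

section
/- Define φ₁ : ℝ × ℝ → ℝ by φ₁(x, y) = (x + √(3 + x² − 3y))/3 on the open set U = {(x, y) ∈ ℝ × ℝ : 3 + x² − 3y > 0}. Then φ₁ is twice continuously differentiable on U and its Laplacian satisfies, for every (x, y) ∈ U, Δφ₁(x, y) = (1/4 − y)·(3 + x² − 3y)^{−3/2}. In particular, Δφ₁(x, y) > 0 if and only if y < 1/4, and Δφ₁(x, y) < 0 if and only if y > 1/4. (Hence, under the Nash solution for the feasibility set {(x,y) : 0 ≤ x ≤ 1, 0 ≤ y ≤ 1 − x²}, Player 1 gains in expectation from a small random perturbation of the disagreement point exactly when its second coordinate is below 1/4.) -/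
open Real

/-- The Laplacian of `φ : ℝ × ℝ → ℝ` at `p`: the sum of the second derivatives
of `φ` in the two coordinate directions at `p`. -/
noncomputable def laplacian (φ : ℝ × ℝ → ℝ) (p : ℝ × ℝ) : ℝ :=
  iteratedDeriv 2 (fun t : ℝ => φ (p.1 + t, p.2)) 0 +
  iteratedDeriv 2 (fun t : ℝ => φ (p.1, p.2 + t)) 0

/-! The Laplacian obeys the chain rule `Δ(h ∘ f) = h''(f) |∇f|² + h'(f) Δf`. For `h = √` this is
`Δ√f = (2 f Δf - |∇f|²) f^(-3/2) / 4`. The radicand `f = 3 + x² - 3y` has `Δf = 2` and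
`|∇f|² = 4x² + 9`, so the terms in `x` cancel and `2 f Δf - |∇f|² = 3 - 12y`; the linear summand
`x` is harmonic. -/

/-- The squared Euclidean norm of the gradient of `f` at `p`, computed from the derivatives along
the same coordinate lines through `p` as in `laplacian`. -/
noncomputable def gradNormSq (f : ℝ × ℝ → ℝ) (p : ℝ × ℝ) : ℝ :=
  deriv (fun t : ℝ => f (p.1 + t, p.2)) 0 ^ 2 + deriv (fun t : ℝ => f (p.1, p.2 + t)) 0 ^ 2

section Slices

variable {E : Type*} [NormedAddCommGroup E] [NormedSpace ℝ E] {n : WithTop ℕ∞}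
  {f : ℝ × ℝ → E} {p : ℝ × ℝ}

theorem contDiffAt_fst_add_slice (hf : ContDiffAt ℝ n f p) :
    ContDiffAt ℝ n (fun t : ℝ => f (p.1 + t, p.2)) 0 :=
  ContDiffAt.comp (g := f) 0 (by simpa using hf) (by fun_prop)

theorem contDiffAt_snd_add_slice (hf : ContDiffAt ℝ n f p) :
    ContDiffAt ℝ n (fun t : ℝ => f (p.1, p.2 + t)) 0 :=
  ContDiffAt.comp (g := f) 0 (by simpa using hf) (by fun_prop)

end Slices

section Laplacian

variable {f g : ℝ × ℝ → ℝ} {p : ℝ × ℝ}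

theorem laplacian_add (hf : ContDiffAt ℝ 2 f p) (hg : ContDiffAt ℝ 2 g p) :
    laplacian (fun q => f q + g q) p = laplacian f p + laplacian g p := by
  simp only [laplacian]
  rw [iteratedDeriv_fun_add (contDiffAt_fst_add_slice hf) (contDiffAt_fst_add_slice hg),
    iteratedDeriv_fun_add (contDiffAt_snd_add_slice hf) (contDiffAt_snd_add_slice hg)]
  ring

theorem laplacian_div_const (c : ℝ) : laplacian (fun q => f q / c) p = laplacian f p / c := by
  simp only [laplacian, iteratedDeriv_div_const, add_div]

theorem laplacian_comp {h : ℝ → ℝ} (hh : ContDiffAt ℝ 2 h (f p)) (hf : ContDiffAt ℝ 2 f p) :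
    laplacian (fun q => h (f q)) p =
      iteratedDeriv 2 h (f p) * gradNormSq f p + deriv h (f p) * laplacian f p := by
  have fst_slice := iteratedDeriv_comp_two (g := h) (by simpa using hh)
    (contDiffAt_fst_add_slice hf)
  have snd_slice := iteratedDeriv_comp_two (g := h) (by simpa using hh)
    (contDiffAt_snd_add_slice hf)
  simp only [Function.comp_def, add_zero] at fst_slice snd_slice
  simp only [laplacian, gradNormSq, fst_slice, snd_slice]
  ring

theorem laplacian_fst_add_snd (u v : ℝ → ℝ) (p : ℝ × ℝ) :
    laplacian (fun q => u q.1 + v q.2) p = iteratedDeriv 2 u p.1 + iteratedDeriv 2 v p.2 := by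
  simp [laplacian, iteratedDeriv_const_add, iteratedDeriv_comp_const_add, add_comm _ (v p.2)]

theorem laplacian_fst (p : ℝ × ℝ) : laplacian Prod.fst p = 0 := by
  simpa [iteratedDeriv_fun_id] using laplacian_fst_add_snd (fun x => x) (fun _ => 0) p

theorem gradNormSq_fst_add_snd (u v : ℝ → ℝ) (p : ℝ × ℝ) :
    gradNormSq (fun q => u q.1 + v q.2) p = deriv u p.1 ^ 2 + deriv v p.2 ^ 2 := by
  simp [gradNormSq, deriv_comp_const_add]

end Laplacian

/- For `x ≤ 0` both sides of the next two identities are `0`, by the conventions for `deriv`, `√`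
and `rpow`. -/
theorem deriv_sqrt_eq_rpow (x : ℝ) : deriv (fun y => √y) x = x ^ (-(1 : ℝ) / 2) / 2 := by
  simp only [sqrt_eq_rpow, Real.deriv_rpow_const]
  norm_num
  ring

theorem iteratedDeriv_two_sqrt (x : ℝ) :
    iteratedDeriv 2 (fun y => √y) x = -x ^ (-(3 : ℝ) / 2) / 4 := by
  simp only [sqrt_eq_rpow, iteratedDeriv_eq_iterate, iter_deriv_rpow_const]
  norm_num [descPochhammer_succ_right]
  ring

theorem laplacian_sqrt {f : ℝ × ℝ → ℝ} {p : ℝ × ℝ} (hf : ContDiffAt ℝ 2 f p) (hpos : 0 < f p) :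
    laplacian (fun q => √(f q)) p =
      (2 * f p * laplacian f p - gradNormSq f p) * f p ^ (-(3 : ℝ) / 2) / 4 := by
  have hpow : f p ^ (-(1 : ℝ) / 2) = f p * f p ^ (-(3 : ℝ) / 2) := by
    rw [← rpow_one_add' hpos.le (by norm_num)]
    norm_num
  rw [laplacian_comp (contDiffAt_sqrt hpos.ne') hf, iteratedDeriv_two_sqrt, deriv_sqrt_eq_rpow,
    hpow]
  ring

section Radicand

variable (a b : ℝ) (p : ℝ × ℝ)

theorem laplacian_const_add_sq_sub_mul :
    laplacian (fun q => a + q.1 ^ 2 - b * q.2) p = 2 := by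
  have hsq : iteratedDeriv 2 (fun x => a + x ^ 2) p.1 = 2 := by simp [iteratedDeriv_const_add]
  have hlin : iteratedDeriv 2 (fun y => -b * y) p.2 = 0 := by
    rw [iteratedDeriv_const_mul_field (-b) fun y => y, iteratedDeriv_fun_id]
    simp
  simp only [sub_eq_add_neg, ← neg_mul]
  rw [laplacian_fst_add_snd (fun x => a + x ^ 2) (fun y => -b * y), hsq, hlin, add_zero]

theorem gradNormSq_const_add_sq_sub_mul :
    gradNormSq (fun q => a + q.1 ^ 2 - b * q.2) p = 4 * p.1 ^ 2 + b ^ 2 := by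
  have hsq : deriv (fun x => a + x ^ 2) p.1 = 2 * p.1 := by simp
  have hlin : deriv (fun y => -b * y) p.2 = -b := by simp
  simp only [sub_eq_add_neg, ← neg_mul]
  rw [gradNormSq_fst_add_snd (fun x => a + x ^ 2) (fun y => -b * y), hsq, hlin]
  ring

end Radicand

/-- For `φ₁(x, y) = (x + √(3 + x² − 3y))/3` on `U = {(x, y) : 3 + x² − 3y > 0}`
(the first coordinate of the Nash solution for the feasibility set
`{(x, y) : 0 ≤ x ≤ 1, 0 ≤ y ≤ 1 − x²}` as a function of the disagreement point):
`φ₁` is twice continuously differentiable on `U`, its Laplacian equals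
`(1/4 − y)·(3 + x² − 3y)^(−3/2)` on `U`, and in particular it is positive iff
`y < 1/4` and negative iff `y > 1/4`. -/
theorem nash_payoff_laplacian
    (φ₁ : ℝ × ℝ → ℝ) (hφ₁ : φ₁ = fun p : ℝ × ℝ => (p.1 + Real.sqrt (3 + p.1 ^ 2 - 3 * p.2)) / 3)
    (U : Set (ℝ × ℝ)) (hU : U = {p : ℝ × ℝ | 0 < 3 + p.1 ^ 2 - 3 * p.2}) :
    ContDiffOn ℝ 2 φ₁ U ∧
    ∀ p ∈ U,
      laplacian φ₁ p = (1 / 4 - p.2) * (3 + p.1 ^ 2 - 3 * p.2) ^ (-(3 : ℝ) / 2) ∧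
      (0 < laplacian φ₁ p ↔ p.2 < 1 / 4) ∧
      (laplacian φ₁ p < 0 ↔ 1 / 4 < p.2) := by
  subst hφ₁ hU
  have hrad (p : ℝ × ℝ) : ContDiffAt ℝ 2 (fun q : ℝ × ℝ => 3 + q.1 ^ 2 - 3 * q.2) p := by fun_prop
  refine ⟨fun p hp => ?_, fun p (hp : 0 < 3 + p.1 ^ 2 - 3 * p.2) => ?_⟩
  · exact ((contDiffAt_fst.add ((hrad p).sqrt (ne_of_gt hp))).div_const 3).contDiffWithinAt
  have hlap : laplacian (fun q => (q.1 + √(3 + q.1 ^ 2 - 3 * q.2)) / 3) p =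
      (1 / 4 - p.2) * (3 + p.1 ^ 2 - 3 * p.2) ^ (-(3 : ℝ) / 2) := by
    rw [laplacian_div_const, laplacian_add contDiffAt_fst ((hrad p).sqrt hp.ne'), laplacian_fst,
      laplacian_sqrt (hrad p) hp, laplacian_const_add_sq_sub_mul, gradNormSq_const_add_sq_sub_mul]
    ring
  have hpow : 0 < (3 + p.1 ^ 2 - 3 * p.2) ^ (-(3 : ℝ) / 2) := rpow_pos_of_pos hp _
  refine ⟨hlap, ?_, ?_⟩
  · rw [hlap, mul_pos_iff_of_pos_right hpow, sub_pos]
  · simp only [hlap, mul_neg_iff, hpow, hpow.not_gt, and_true, and_false, false_or, sub_neg]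
end
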